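/- arXiv:2501.18600 — 3 statements merged into one kernel-verified Lean document; each statement's English description precedes it below -/
import Mathlib

section
/- Let L = 2m+1 ≥ 3 be an odd integer and let N ≥ 2 be an integer admitting a divisor d ≥ 2 with gcd(d, L) = 1. Then the L-state M-type Grover walk on the cycle with N vertices has infinite period; that is, (U^{M,L}_N)^n ≠ I for every integer n ≥ 1. -/
open Matrix Polynomial

/-- The M-type Grover coin `A^{M,L}` for `L = 2m+1`: diagonal entries `-(2m-1)/L`,
off-diagonal entries `2/L`. -/
noncomputable def coinM (m : ℕ) : Matrix (Fin (2*m+1)) (Fin (2*m+1)) ℂ :=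
  fun i j => if i = j then (1 - 2*(m:ℂ)) / (2*(m:ℂ)+1) else 2 / (2*(m:ℂ)+1)

/-- The F-type Grover coin `A^{F,L}` for `L = 2m+1`: anti-diagonal entries `-(2m-1)/L`,
all other entries `2/L`. -/
noncomputable def coinF (m : ℕ) : Matrix (Fin (2*m+1)) (Fin (2*m+1)) ℂ :=
  fun i j => if (i : ℕ) + (j : ℕ) = 2*m then (1 - 2*(m:ℂ)) / (2*(m:ℂ)+1)
    else 2 / (2*(m:ℂ)+1)

/-- The time-evolution operator of the `L`-state (`L = 2m+1`) Grover walk with local coin `A`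
on the cycle `C_N`: entry at `((v,i),(w,j))` is `A i j` if `v ≡ w + (i - m) (mod N)`,
and `0` otherwise. -/
noncomputable def walkU (m N : ℕ) (A : Matrix (Fin (2*m+1)) (Fin (2*m+1)) ℂ) :
    Matrix ((ZMod N) × Fin (2*m+1)) ((ZMod N) × Fin (2*m+1)) ℂ :=
  fun p q => if p.1 = q.1 + ((p.2 : ℕ) : ZMod N) - (m : ZMod N) then A p.2 q.2 else 0

/-- `ζ_N = exp(2πi/N)`. -/
noncomputable def zetaN (N : ℕ) : ℂ := Complex.exp (2 * Real.pi * Complex.I / N)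

/-- The diagonal matrix `Z = diag(ζ_N^m, ζ_N^{m-1}, …, ζ_N^{-m})`. -/
noncomputable def Zmat (N m : ℕ) : Matrix (Fin (2*m+1)) (Fin (2*m+1)) ℂ :=
  Matrix.diagonal fun i => zetaN N ^ ((m : ℤ) - ((i : ℕ) : ℤ))

/-- The integer power `Z^k` of the diagonal matrix `Z`, defined for any `k ∈ ℤ`. -/
noncomputable def ZmatPow (N m : ℕ) (k : ℤ) : Matrix (Fin (2*m+1)) (Fin (2*m+1)) ℂ :=
  Matrix.diagonal fun i => zetaN N ^ ((((m : ℤ) - ((i : ℕ) : ℤ))) * k)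

/-- `f^{M,L}_{N,k}(x) = det(x·I_L − Z^k A^{M,L})`. -/
noncomputable def fMk (m N : ℕ) (k : ℤ) : Polynomial ℂ :=
  (ZmatPow N m k * coinM m).charpoly

/-- `f^{M,L}_N(x) = ∏_{k=0}^{N-1} f^{M,L}_{N,k}(x)`. -/
noncomputable def fM (m N : ℕ) : Polynomial ℂ :=
  ∏ k ∈ Finset.range N, fMk m N (k : ℤ)

/-- `f^{F,L}_{N,k}(x) = det(x·I_L − Z^k A^{F,L})`. -/
noncomputable def fFk (m N : ℕ) (k : ℤ) : Polynomial ℂ :=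
  (ZmatPow N m k * coinF m).charpoly

/-- `f^{F,L}_N(x) = ∏_{k=0}^{N-1} f^{F,L}_{N,k}(x)`. -/
noncomputable def fF (m N : ℕ) : Polynomial ℂ :=
  ∏ k ∈ Finset.range N, fFk m N (k : ℤ)

/-!
A character `χ` of `ℤ/Nℤ` cuts an `L × L` block out of the walk, with trace
`(2 / L - 1) ∑_{i < L} χ (m - i)`. If the walk has finite order, so has the block, and its trace is
an algebraic integer; as `L` is odd, so is the average of the `L` roots of unity `χ (m - i)`.
All conjugates of an average of roots of unity that are not all equal lie in the open unit disc, so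
an integral average of this kind is `0`. When `χ` is injective, multiplying the sum by `χ 1 - 1`
telescopes it to `χ (m + 1) - χ (-m)`, and this vanishes only if `N ∣ L`.
-/

theorem isIntegral_of_isOfFinOrder {R : Type*} [Ring R] {x : R} (hx : IsOfFinOrder x) :
    IsIntegral ℤ x := by
  obtain ⟨n, hn, hxn⟩ := hx.exists_pow_eq_one
  exact IsIntegral.of_pow hn (hxn ▸ isIntegral_one)

theorem isOfFinOrder_addChar_apply {G M : Type*} [AddGroup G] [Finite G] [Monoid M]
    (χ : AddChar G M) (a : G) : IsOfFinOrder (χ a) :=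
  χ.toMonoidHom.isOfFinOrder (isOfFinOrder_of_finite (Multiplicative.ofAdd a))

theorem sum_range_addChar_sub_mul {R S : Type*} [AddCommGroupWithOne R] [Ring S]
    (χ : AddChar R S) (a : R) (n : ℕ) :
    (∑ i ∈ Finset.range n, χ (a - i)) * (χ 1 - 1) = χ (a + 1) - χ (a + 1 - n) := by
  have telescope := Finset.sum_range_sub' (fun i : ℕ => χ (a + 1 - i)) n
  rw [Nat.cast_zero, sub_zero] at telescope
  rw [← telescope, Finset.sum_mul]
  refine Finset.sum_congr rfl fun i _ => ?_
  rw [mul_sub, mul_one, ← AddChar.map_add_eq_mul, Nat.cast_succ, add_sub_add_right_eq_sub,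
    sub_add_eq_add_sub]

section RootsOfUnityAverage

variable {ι : Type*} [Fintype ι]

theorem norm_average_lt_of_ne {E : Type*} [NormedAddCommGroup E] [NormedSpace ℝ E]
    [StrictConvexSpace ℝ E] {x : ι → E} {r : ℝ} (hx : ∀ i, ‖x i‖ ≤ r) {i j : ι} (hij : x i ≠ x j) :
    ‖(Fintype.card ι : ℝ)⁻¹ • ∑ k, x k‖ < r := by
  have : Nonempty ι := ⟨i⟩
  have hcard : (Fintype.card ι : ℝ) ≠ 0 := Nat.cast_ne_zero.mpr Fintype.card_ne_zero
  rw [Finset.smul_sum]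
  exact norm_sum_lt_of_strictConvexSpace (fun _ _ => by positivity) (by simp [hcard])
    (Finset.mem_univ i) (Finset.mem_univ j) hij (inv_ne_zero hcard) (inv_ne_zero hcard)
    fun k _ => hx k

theorem eq_zero_of_isIntegral_of_norm_embedding_lt_one {K : Type*} [Field K] [NumberField K]
    {α : K} (hα : IsIntegral ℤ α) (hlt : ∀ φ : K →+* ℂ, ‖φ α‖ < 1) : α = 0 := by
  by_contra hα0
  obtain ⟨φ, hφ⟩ := NumberField.exists_conjugate_one_le_norm (K := K) (α := ⟨α, hα⟩)
    (fun h => hα0 (congrArg Subtype.val h))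
  exact (hlt φ).not_ge hφ

theorem sum_eq_zero_of_isIntegral_average_of_numberField {K : Type*} [Field K] [NumberField K]
    {x : ι → K} (hx : ∀ i, IsOfFinOrder (x i))
    (hint : IsIntegral ℤ ((∑ i, x i) / Fintype.card ι)) {i j : ι} (hij : x i ≠ x j) :
    ∑ i, x i = 0 := by
  have : Nonempty ι := ⟨i⟩
  have average_eq_zero : (∑ i, x i) / (Fintype.card ι : K) = 0 := by
    refine eq_zero_of_isIntegral_of_norm_embedding_lt_one hint fun φ => ?_
    have norm_le : ∀ k, ‖φ (x k)‖ ≤ 1 := fun k =>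
      (φ.toMonoidHom.isOfFinOrder (hx k)).norm_eq_one.le
    simpa [div_eq_inv_mul] using norm_average_lt_of_ne norm_le (φ.injective.ne hij)
  exact (div_eq_zero_iff.mp average_eq_zero).resolve_right
    (Nat.cast_ne_zero.mpr Fintype.card_ne_zero)

theorem sum_eq_zero_of_isIntegral_average {F : Type*} [Field F] [CharZero F] {x : ι → F}
    (hx : ∀ i, IsOfFinOrder (x i)) (hint : IsIntegral ℤ ((∑ i, x i) / Fintype.card ι))
    {i j : ι} (hij : x i ≠ x j) : ∑ i, x i = 0 := by
  let K := IntermediateField.adjoin ℚ (Set.range x)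
  have : FiniteDimensional ℚ K := IntermediateField.finiteDimensional_adjoin <|
    Set.forall_mem_range.mpr fun i => (isIntegral_of_isOfFinOrder (hx i)).tower_top
  have : NumberField K := ⟨⟩
  let y : ι → K := fun i => ⟨x i, IntermediateField.subset_adjoin ℚ _ (Set.mem_range_self i)⟩
  have hy : ∀ i, IsOfFinOrder (y i) := fun i =>
    (Submonoid.isOfFinOrder_coe (H := K.toSubfield.toSubmonoid)).mp (hx i)
  have sum_coe : algebraMap K F (∑ i, y i) = ∑ i, x i := map_sum (algebraMap K F) y _
  have hyint : IsIntegral ℤ ((∑ i, y i) / Fintype.card ι) := by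
    rwa [← isIntegral_algebraMap_iff (algebraMap K F).injective, map_div₀, map_natCast, sum_coe]
  rw [← sum_coe, sum_eq_zero_of_isIntegral_average_of_numberField hy hyint
    fun h => hij (congrArg Subtype.val h), map_zero]

end RootsOfUnityAverage

theorem isIntegral_of_mem_spectrum {R K A : Type*} [CommRing R] [Field K] [Ring A] [Algebra R K]
    [Algebra R A] [Algebra K A] [IsScalarTower R K A] {a : A} (ha : IsIntegral R a) {μ : K}
    (hμ : μ ∈ spectrum K a) : IsIntegral R μ := by
  obtain ⟨p, hp, hpa⟩ := ha
  have : Nontrivial A := not_subsingleton_iff_nontrivial.mp fun _ => by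
    simp [spectrum.of_subsingleton] at hμ
  have aeval_mem := spectrum.subset_polynomial_aeval a (p.map (algebraMap R K)) ⟨μ, hμ, rfl⟩
  rw [aeval_map_algebraMap, aeval_def, hpa, spectrum.zero_eq] at aeval_mem
  exact ⟨p, hp, by simpa [eval_map] using aeval_mem⟩

section Matrix

variable {n : Type*} [Fintype n] [DecidableEq n]

theorem isIntegral_trace_of_isIntegral {R K : Type*} [CommRing R] [Field K] [Algebra R K]
    {B : Matrix n n K} (hB : IsIntegral R B) : IsIntegral R B.trace := by
  let Ω := AlgebraicClosure K
  let f : K →ₐ[R] Ω := IsScalarTower.toAlgHom R K Ω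
  have hfB : IsIntegral R (B.map f) := hB.map f.mapMatrix
  rw [← isIntegral_algHom_iff f (algebraMap K Ω).injective, AddMonoidHom.map_trace,
    trace_eq_sum_roots_charpoly]
  refine (integralClosure R Ω).multiset_sum_mem fun μ hμ => ?_
  exact isIntegral_of_mem_spectrum hfB
    (mem_spectrum_iff_isRoot_charpoly.mpr (isRoot_of_mem_roots hμ))

theorem pow_mul_eq_mul_pow_of_mul_eq_mul {m R : Type*} [Fintype m] [DecidableEq m] [Semiring R]
    {U : Matrix m m R} {P : Matrix m n R} {B : Matrix n n R} (h : U * P = P * B) (k : ℕ) :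
    U ^ k * P = P * B ^ k := by
  induction k with
  | zero => simp
  | succ k ih =>
    rw [pow_succ, Matrix.mul_assoc, h, ← Matrix.mul_assoc, ih, Matrix.mul_assoc, ← pow_succ]

end Matrix

section FourierBlock

variable {m N : ℕ} (χ : AddChar (ZMod N) ℂ)

/-- The plane waves of character `χ` on the cycle, one column for each of the `L` coin states:
they span an invariant subspace of the walk. -/
def planeWave (m : ℕ) : Matrix (ZMod N × Fin (2 * m + 1)) (Fin (2 * m + 1)) ℂ :=
  fun p j => if p.2 = j then χ p.1 else 0

/-- The Fourier block of the walk with coin `A` at the character `χ`: the matrix by which the walk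
acts on plane waves. For `χ v = ζ_N ^ (k * v)` it is `Z^k A`. -/
def fourierBlock (A : Matrix (Fin (2 * m + 1)) (Fin (2 * m + 1)) ℂ) :
    Matrix (Fin (2 * m + 1)) (Fin (2 * m + 1)) ℂ :=
  diagonal (fun i : Fin (2 * m + 1) => χ ((m : ZMod N) - (i : ℕ))) * A

theorem planeWave_mul_apply (B : Matrix (Fin (2 * m + 1)) (Fin (2 * m + 1)) ℂ) (v : ZMod N)
    (i j : Fin (2 * m + 1)) : (planeWave χ m * B) (v, i) j = χ v * B i j := by
  simp [Matrix.mul_apply, planeWave]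

theorem planeWave_mul_injective :
    Function.Injective fun B : Matrix (Fin (2 * m + 1)) (Fin (2 * m + 1)) ℂ =>
      planeWave χ m * B := by
  intro B C hBC
  ext i j
  simpa [planeWave_mul_apply] using congrFun₂ hBC (0, i) j

theorem trace_fourierBlock_coinM :
    (fourierBlock χ (coinM m)).trace =
      (1 - 2 * (m : ℂ)) / (2 * m + 1) * ∑ i : Fin (2 * m + 1), χ ((m : ZMod N) - (i : ℕ)) := by
  simp [trace, fourierBlock, coinM, diagonal_mul, Finset.mul_sum, mul_comm]

variable [NeZero N]

theorem walkU_mul_planeWave (A : Matrix (Fin (2 * m + 1)) (Fin (2 * m + 1)) ℂ) :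
    walkU m N A * planeWave χ m = planeWave χ m * fourierBlock χ A := by
  ext ⟨v, i⟩ j
  have source_iff (w : ZMod N) :
      v = w + ((i : ℕ) : ZMod N) - (m : ZMod N) ↔ w = v + ((m : ZMod N) - (i : ℕ)) := by
    grind
  rw [planeWave_mul_apply, fourierBlock, diagonal_mul, ← mul_assoc, ← AddChar.map_add_eq_mul]
  simp [Matrix.mul_apply, Fintype.sum_prod_type, walkU, planeWave, source_iff, mul_comm]

theorem fourierBlock_pow_eq_one {A : Matrix (Fin (2 * m + 1)) (Fin (2 * m + 1)) ℂ} {n : ℕ}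
    (hA : walkU m N A ^ n = 1) : fourierBlock χ A ^ n = 1 := by
  apply planeWave_mul_injective χ
  have := pow_mul_eq_mul_pow_of_mul_eq_mul (walkU_mul_planeWave χ A) n
  simpa [hA] using this.symm

theorem isIntegral_average_of_walkU_pow_eq_one {n : ℕ} (hn : 1 ≤ n)
    (hU : walkU m N (coinM m) ^ n = 1) :
    IsIntegral ℤ ((∑ i : Fin (2 * m + 1), χ ((m : ZMod N) - (i : ℕ))) / (2 * m + 1)) := by
  set S := ∑ i : Fin (2 * m + 1), χ ((m : ZMod N) - (i : ℕ)) with hS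
  have hL : (2 * (m : ℂ) + 1) ≠ 0 := by exact_mod_cast (2 * m).succ_ne_zero
  have block_finite_order : IsOfFinOrder (fourierBlock χ (coinM m)) :=
    isOfFinOrder_iff_pow_eq_one.mpr ⟨n, hn, fourierBlock_pow_eq_one χ hU⟩
  have trace_integral := isIntegral_trace_of_isIntegral
    (isIntegral_of_isOfFinOrder block_finite_order)
  rw [trace_fourierBlock_coinM, ← hS] at trace_integral
  have S_integral : IsIntegral ℤ S :=
    IsIntegral.sum _ fun i _ => isIntegral_of_isOfFinOrder (isOfFinOrder_addChar_apply χ _)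
  -- The coefficients of `S` match because `1 / L = 1 - m * (2 / L)` for `L = 2m + 1`.
  have average_eq : S / (2 * m + 1) = S - m * ((1 - 2 * m) / (2 * m + 1) * S + S) := by
    field_simp
    ring
  rw [average_eq]
  exact S_integral.sub ((isIntegral_natCast m).mul (trace_integral.add S_integral))

end FourierBlock

theorem stmt2_general (m N : ℕ) [NeZero N] (hm : 1 ≤ m) (hN : ¬ N ∣ 2 * m + 1) :
    ∀ n : ℕ, 1 ≤ n → (walkU m N (coinM m)) ^ n ≠ 1 := by
  intro n hn hU
  let χ : AddChar (ZMod N) ℂ := ZMod.stdAddChar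
  have χ_injective : Function.Injective χ := ZMod.injective_stdAddChar
  let x : Fin (2 * m + 1) → ℂ := fun i => χ ((m : ZMod N) - (i : ℕ))
  have x_zero_ne_x_one : x ⟨0, by omega⟩ ≠ x ⟨1, by omega⟩ := by
    refine χ_injective.ne fun h => hN ?_
    have one_eq_zero : ((1 : ℕ) : ZMod N) = 0 := by simpa using (sub_right_inj.mp h).symm
    exact ((ZMod.natCast_eq_zero_iff _ _).mp one_eq_zero).trans (one_dvd _)
  have sum_eq_zero : ∑ i, x i = 0 :=
    sum_eq_zero_of_isIntegral_average (fun i => isOfFinOrder_addChar_apply χ _)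
      (by simpa using isIntegral_average_of_walkU_pow_eq_one χ hn hU)
      x_zero_ne_x_one
  have endpoints_eq : χ (m + 1) = χ (m + 1 - (2 * m + 1 : ℕ)) := by
    rw [← sub_eq_zero, ← sum_range_addChar_sub_mul, Finset.sum_range, sum_eq_zero, zero_mul]
  have L_eq_zero : ((2 * m + 1 : ℕ) : ZMod N) = 0 := sub_eq_self.mp (χ_injective endpoints_eq).symm
  exact hN ((ZMod.natCast_eq_zero_iff _ _).mp L_eq_zero)

/-- For odd `L = 2m+1 ≥ 3` and `N ≥ 2` admitting a divisor `d ≥ 2` coprime to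
`L`, the M-type Grover walk on the cycle with `N` vertices has infinite period. -/
theorem stmt2 (m N d : ℕ) [NeZero N] (hm : 1 ≤ m) (hN : 2 ≤ N)
    (hd : d ∣ N) (hd2 : 2 ≤ d) (hcop : Nat.gcd d (2*m+1) = 1) :
    ∀ n : ℕ, 1 ≤ n → (walkU m N (coinM m)) ^ n ≠ 1 := by
  exact stmt2_general m N hm fun hNL =>
    absurd (Nat.eq_one_of_dvd_coprimes hcop dvd_rfl (hd.trans hNL)) (by omega)
end

section
/- Let L = 2m+1 ≥ 3 be an odd integer and let N₁, N₂ ≥ 2 with N₁ ∣ N₂. Then f^{M,L}_{N₁}(x) divides f^{M,L}_{N₂}(x) in the ring of polynomials over ℂ. -/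
open Matrix Polynomial

/-!
Multiplying over `k < N` the values `F (ζ_N ^ k)` is multiplying `F z` over all `N`-th roots of
unity `z`, once each. If `N₁ ∣ N₂`, every `N₁`-th root of unity is an `N₂`-th one, so the factors
for `N₁` occur among those for `N₂`. For a walk with coin `A`, `F z` is the characteristic
polynomial of `diag (z ^ w i) * A`, where `w i` is minus the displacement of the walker in
state `i`.
-/

section RootsOfUnity

variable {R M : Type*} [CommRing R] [IsDomain R] [CommMonoid M]

theorem nthRootsFinset_one_subset_of_dvd {m n : ℕ} (hn : n ≠ 0) (hmn : m ∣ n) :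
    nthRootsFinset m (1 : R) ⊆ nthRootsFinset n 1 := by
  intro z hz
  rw [mem_nthRootsFinset (Nat.pos_of_dvd_of_pos hmn hn.pos)] at hz
  obtain ⟨d, rfl⟩ := hmn
  rw [mem_nthRootsFinset hn.pos, pow_mul, hz, one_pow]

theorem prod_range_pow_eq_prod_nthRootsFinset {ζ : R} {n : ℕ} (hζ : IsPrimitiveRoot ζ n)
    (F : R → M) :
    ∏ k ∈ Finset.range n, F (ζ ^ k) = ∏ z ∈ nthRootsFinset n 1, F z := by
  classical
  have himage : (Finset.range n).image (ζ ^ ·) = nthRootsFinset n 1 := by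
    rw [nthRootsFinset_def, hζ.nthRoots_eq (one_pow n)]
    simp only [mul_one, Finset.image, Finset.range_val]
  rw [← himage, Finset.prod_image hζ.injOn_pow]

theorem prod_range_pow_dvd_prod_range_pow {ζ₁ ζ₂ : R} {N₁ N₂ : ℕ} (hζ₁ : IsPrimitiveRoot ζ₁ N₁)
    (hζ₂ : IsPrimitiveRoot ζ₂ N₂) (hN₂ : N₂ ≠ 0) (hdvd : N₁ ∣ N₂) (F : R → M) :
    ∏ k ∈ Finset.range N₁, F (ζ₁ ^ k) ∣ ∏ k ∈ Finset.range N₂, F (ζ₂ ^ k) := by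
  rw [prod_range_pow_eq_prod_nthRootsFinset hζ₁, prod_range_pow_eq_prod_nthRootsFinset hζ₂]
  exact Finset.prod_dvd_prod_of_subset _ _ F (nthRootsFinset_one_subset_of_dvd hN₂ hdvd)

end RootsOfUnity

theorem isPrimitiveRoot_zetaN {N : ℕ} (hN : N ≠ 0) : IsPrimitiveRoot (zetaN N) N :=
  Complex.isPrimitiveRoot_exp N hN

theorem stmt8_general {K ι : Type*} [Field K] [Fintype ι] [DecidableEq ι] {ζ₁ ζ₂ : K}
    {N₁ N₂ : ℕ} (hζ₁ : IsPrimitiveRoot ζ₁ N₁) (hζ₂ : IsPrimitiveRoot ζ₂ N₂) (hN₂ : N₂ ≠ 0)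
    (hdvd : N₁ ∣ N₂) (w : ι → ℤ) (A : Matrix ι ι K) :
    ∏ k ∈ Finset.range N₁, (diagonal (fun i => ζ₁ ^ (w i * k)) * A).charpoly ∣
      ∏ k ∈ Finset.range N₂, (diagonal (fun i => ζ₂ ^ (w i * k)) * A).charpoly := by
  have hpow (ζ : K) (k : ℕ) (i : ι) : ζ ^ (w i * k) = (ζ ^ k) ^ w i := by
    rw [_root_.zpow_mul', zpow_natCast]
  simp only [hpow]
  exact prod_range_pow_dvd_prod_range_pow hζ₁ hζ₂ hN₂ hdvd
    fun z => (diagonal (fun i => z ^ w i) * A).charpoly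

/-- For odd `L = 2m+1 ≥ 3` and `N₁ ∣ N₂` (both `≥ 2`),
`f^{M,L}_{N₁}(x)` divides `f^{M,L}_{N₂}(x)` in `ℂ[X]`. -/
theorem stmt8 (m N₁ N₂ : ℕ) (hm : 1 ≤ m) (hN₁ : 2 ≤ N₁) (hN₂ : 2 ≤ N₂)
    (hdvd : N₁ ∣ N₂) :
    fM m N₁ ∣ fM m N₂ := by
  exact stmt8_general (isPrimitiveRoot_zetaN (by omega)) (isPrimitiveRoot_zetaN (by omega))
    (by omega) hdvd _ (coinM m)
end

section
/- Let L = 2m+1 ≥ 3 be an odd integer, N ≥ 2, and k an integer. Then f^{M,L}_{N,k}(x) = det(x·I_L − Z^k A^{M,L}) is a monic polynomial of degree L over ℂ whose constant coefficient equals −1 and whose coefficient of x equals −((2m−1)/L)·Σ_{j=−m}^{m} ζ_N^{jk}. Moreover, there exist integers a_j (for −(2m−1) ≤ j ≤ 2m−1) and b_j (for −(3m−3) ≤ j ≤ 3m−3), depending only on L (not on N or k), such that the coefficient of x² equals −((2m−3)/L)·Σ_{|j|≤2m−1} a_j ζ_N^{jk} and the coefficient of x³ equals −((2m−5)/L)·Σ_{|j|≤3m−3}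 b_j ζ_N^{jk}. -/
open Matrix Polynomial

/-!
A Grover coin is a rank-one perturbation `c J - 1` of a scalar matrix, so for a diagonal matrix
`D = diag(d)` the matrix determinant lemma gives `det (X - D (c J - 1)) = (1 - c n) P + c X P'` with
`P = ∏ᵢ (X + dᵢ)`. Taking `c = 2 / n` shows that the coefficient of `X ^ r` is
`-((n - 2 r) / n)` times that of `P`. When `n = 2m + 1` and `d` runs over `z ^ j` for `|j| ≤ m`,
the latter is the sum of `z ^ (∑ t)` over the `r`-element subsets `t` of `[-m, m]`, and
`|∑ t| ≤ r (2m + 1 - r) / 2`. The integers `a_j` and `b_j` count the subsets of size two and three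
with sum `j`.
-/

section MatrixDeterminantLemma

open Finset

variable {n R : Type*} [Fintype n] [DecidableEq n] [CommRing R]

lemma det_updateRow_add_vecMulVec (A : Matrix n n R) {u : n → R} (v : n → R) {k : n}
    (hk : u k = 0) : ((A + vecMulVec u v).updateRow k v).det = (A.updateRow k v).det := by
  refine det_eq_of_forall_row_eq_smul_add_const u k hk fun i j ↦ ?_
  obtain rfl | hik := eq_or_ne i k
  · simp [hk]
  · simp [hik, vecMulVec_apply]

lemma det_add_vecMulVec_single_add (A : Matrix n n R) {u : n → R} (v : n → R) {k : n}
    (hk : u k = 0) (x : R) :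
    (A + vecMulVec (Pi.single k x + u) v).det =
      (A + vecMulVec u v).det + x * (A.updateRow k v).det := by
  have hrow : A + vecMulVec (Pi.single k x + u) v =
      (A + vecMulVec u v).updateRow k ((A + vecMulVec u v) k + x • v) := by
    ext i j
    obtain rfl | hik := eq_or_ne i k
    · simp [vecMulVec_apply, hk]
    · simp [vecMulVec_apply, hik]
  rw [hrow, det_updateRow_add, updateRow_eq_self, det_updateRow_smul,
    det_updateRow_add_vecMulVec A v hk]

theorem det_add_vecMulVec (A : Matrix n n R) (u v : n → R) :
    (A + vecMulVec u v).det = A.det + u ⬝ᵥ cramer Aᵀ v := by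
  have partial_sum (s : Finset n) :
      (A + vecMulVec (∑ k ∈ s, Pi.single k (u k)) v).det =
        A.det + ∑ k ∈ s, u k * (A.updateRow k v).det := by
    induction s using Finset.induction_on with
    | empty => simp
    | insert k s hks ih =>
      have hk : (∑ i ∈ s, Pi.single i (u i) : n → R) k = 0 := by
        simp [Finset.sum_apply, Pi.single_apply, hks]
      rw [sum_insert hks, sum_insert hks, det_add_vecMulVec_single_add A v hk, ih]
      ring
  simpa [Finset.univ_sum_single, dotProduct, cramer_transpose_apply] using partial_sum univ

lemma det_diagonal_add_vecMulVec (w u v : n → R) :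
    (diagonal w + vecMulVec u v).det = ∏ i, w i + ∑ i, u i * v i * ∏ j ∈ univ.erase i, w j := by
  rw [det_add_vecMulVec, det_diagonal, diagonal_transpose, cramer_eq_adjugate_mulVec,
    adjugate_diagonal]
  simp only [dotProduct, mulVec_diagonal]
  congr 1
  exact sum_congr rfl fun i _ ↦ by ring

end MatrixDeterminantLemma

section Charpoly

open Finset

variable {n R : Type*} [Fintype n] [DecidableEq n] [CommRing R]

lemma charmatrix_diagonal_mul_smul_sub_one (c : R) (d : n → R) :
    charmatrix (diagonal d * (c • vecMulVec 1 1 - 1)) =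
      diagonal (fun i ↦ X + C (d i)) + vecMulVec (fun i ↦ -(C c * C (d i))) 1 := by
  ext1 i j
  obtain rfl | hij := eq_or_ne i j
  · simp only [charmatrix_apply_eq, diagonal_mul, Matrix.sub_apply, Matrix.smul_apply,
      vecMulVec_apply, Pi.one_apply, smul_eq_mul, one_apply_eq, C_mul, C_sub, C_1,
      Matrix.add_apply, diagonal_apply_eq]
    ring
  · simp only [charmatrix_apply_ne _ _ _ hij, diagonal_mul, Matrix.sub_apply, Matrix.smul_apply,
      vecMulVec_apply, Pi.one_apply, smul_eq_mul, one_apply_ne hij, C_mul, C_sub, C_1, C_0,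
      Matrix.add_apply, diagonal_apply_ne _ hij]
    ring

theorem charpoly_diagonal_mul_smul_sub_one (c : R) (d : n → R) :
    (diagonal d * (c • vecMulVec 1 1 - 1)).charpoly =
      C (1 - c * Fintype.card n) * ∏ i, (X + C (d i)) +
        C c * (X * derivative (∏ i, (X + C (d i)))) := by
  have hterm (i : n) : C (d i) * ∏ j ∈ univ.erase i, (X + C (d j)) =
      ∏ j, (X + C (d j)) - X * ∏ j ∈ univ.erase i, (X + C (d j)) := by
    rw [← mul_prod_erase univ (fun j ↦ X + C (d j)) (mem_univ i)]
    ring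
  have hderiv : derivative (∏ i, (X + C (d i))) = ∑ i, ∏ j ∈ univ.erase i, (X + C (d j)) := by
    simp [derivative_prod_finset]
  calc (diagonal d * (c • vecMulVec 1 1 - 1)).charpoly
      = ∏ i, (X + C (d i)) -
          C c * ∑ i, C (d i) * ∏ j ∈ univ.erase i, (X + C (d j)) := by
        rw [charpoly, charmatrix_diagonal_mul_smul_sub_one, det_diagonal_add_vecMulVec, mul_sum,
          sub_eq_add_neg, ← sum_neg_distrib]
        simp [mul_assoc]
    _ = C (1 - c * Fintype.card n) * ∏ i, (X + C (d i)) +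
          C c * (X * derivative (∏ i, (X + C (d i)))) := by
        simp only [hterm, sum_sub_distrib, ← mul_sum, ← hderiv, sum_const, card_univ,
          nsmul_eq_mul, C_sub, C_1, C_mul, C_eq_natCast]
        ring

lemma coeff_charpoly_diagonal_mul_smul_sub_one (c : R) (d : n → R) (r : ℕ) :
    (diagonal d * (c • vecMulVec 1 1 - 1)).charpoly.coeff r =
      (1 - c * Fintype.card n + c * r) * (∏ i, (X + C (d i))).coeff r := by
  rw [charpoly_diagonal_mul_smul_sub_one, coeff_add, coeff_C_mul, coeff_C_mul]
  cases r with
  | zero => simp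
  | succ r =>
    rw [coeff_X_mul, coeff_derivative]
    push_cast
    ring

end Charpoly

section SubsetSums

open Finset

/-- The number of `r`-element subsets of `s` with sum `j`. For `s = [-m, m]` these numbers are the
coefficients of a Gaussian binomial coefficient, centred at `j = 0`. -/
def subsetSumCount (s : Finset ℤ) (r : ℕ) (j : ℤ) : ℕ :=
  #{t ∈ s.powersetCard r | ∑ x ∈ t, x = j}

lemma two_mul_abs_sum_le {m : ℕ} {t : Finset ℤ} (ht : t ⊆ Icc (-(m : ℤ)) m) :
    2 * |∑ x ∈ t, x| ≤ #t * (2 * m + 1 - #t) := by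
  have hlower := sum_range_le_sum fun x hx ↦ (mem_Icc.mp (ht hx)).1
  have hupper := sum_le_sum_range fun x hx ↦ (mem_Icc.mp (ht hx)).2
  have hgauss (r : ℕ) : 2 * ∑ n ∈ range r, (n : ℤ) = r * (r - 1) := by
    induction r with
    | zero => simp
    | succ r ih => rw [sum_range_succ, mul_add, ih]; push_cast; ring
  simp only [sum_add_distrib, sum_sub_distrib, sum_const, card_range, nsmul_eq_mul]
    at hlower hupper
  have habs : 2 * |∑ x ∈ t, x| = |2 * ∑ x ∈ t, x| := by rw [abs_mul, abs_two]
  rw [habs, abs_le]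
  constructor <;> linarith [hgauss #t]

lemma sum_Icc_neg_self (m : ℕ) : ∑ x ∈ Icc (-(m : ℤ)) m, x = 0 := by
  have hbound := two_mul_abs_sum_le (Subset.refl (Icc (-(m : ℤ)) m))
  have hcard : (#(Icc (-(m : ℤ)) m) : ℤ) = 2 * m + 1 := by rw [Int.card_Icc]; lia
  rw [hcard, sub_self, mul_zero] at hbound
  exact abs_nonpos_iff.mp (by linarith)

lemma prod_fin_eq_prod_Icc {M : Type*} [CommMonoid M] (m : ℕ) (f : ℤ → M) :
    ∏ i : Fin (2 * m + 1), f ((i : ℕ) - m) = ∏ j ∈ Icc (-(m : ℤ)) m, f j := by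
  rw [Fin.prod_univ_eq_prod_range (fun i ↦ f ((i : ℤ) - m))]
  refine prod_nbij' (fun i ↦ (i : ℤ) - m) (fun j ↦ (j + m).toNat) ?_ ?_ ?_ ?_ fun _ _ ↦ rfl <;>
    simp only [mem_range, mem_Icc] <;> lia

lemma prod_zpow_eq_zpow_sum₀ {ι G : Type*} [CommGroupWithZero G] {z : G} (hz : z ≠ 0)
    (s : Finset ι) (f : ι → ℤ) : ∏ i ∈ s, z ^ f i = z ^ ∑ i ∈ s, f i := by
  induction s using Finset.cons_induction with
  | empty => simp
  | cons i s hi ih => rw [prod_cons, sum_cons, zpow_add₀ hz, ih]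

lemma coeff_prod_X_add_C {ι R : Type*} [DecidableEq ι] [CommSemiring R] (s : Finset ι) (f : ι → R)
    (r : ℕ) :
    (∏ i ∈ s, (X + C (f i))).coeff r = ∑ t ∈ s.powersetCard r, ∏ i ∈ s \ t, f i := by
  simp only [prod_add, prod_const, ← map_prod, finsetSum_coeff, coeff_mul_C, coeff_X_pow,
    powersetCard_eq_filter, sum_filter, ite_mul, one_mul, zero_mul, eq_comm]

lemma sum_powersetCard_comp_sum {R : Type*} [Semiring R] {s S : Finset ℤ} {r : ℕ} (f : ℤ → R)
    (hS : ∀ t ∈ s.powersetCard r, ∑ x ∈ t, x ∈ S) :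
    ∑ t ∈ s.powersetCard r, f (∑ x ∈ t, x) = ∑ j ∈ S, (subsetSumCount s r j : R) * f j := by
  simp only [← sum_fiberwise_of_maps_to' hS f, sum_const, nsmul_eq_mul, subsetSumCount]

lemma coeff_prod_X_add_C_zpow_neg {K : Type*} [Field K] {z : K} (hz : z ≠ 0) (m r : ℕ) :
    (∏ j ∈ Icc (-(m : ℤ)) m, (X + C (z ^ (-j)))).coeff r =
      ∑ t ∈ (Icc (-(m : ℤ)) m).powersetCard r, z ^ ∑ x ∈ t, x := by
  rw [coeff_prod_X_add_C]
  refine sum_congr rfl fun t ht ↦ ?_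
  have hsum := sum_sdiff (f := id) (mem_powersetCard.mp ht).1
  simp only [id_eq, sum_Icc_neg_self] at hsum
  rw [prod_zpow_eq_zpow_sum₀ hz, sum_neg_distrib, neg_eq_of_add_eq_zero_right hsum]

end SubsetSums

section GroverCoin

open Finset

variable {K : Type*} [Field K] {z : K}

/-- The Grover coin `(2 / n) J - 1` of size `n`, with `J` the all-ones matrix, over a field in which
`n` is invertible. -/
def groverCoin (n K : Type*) [Fintype n] [DecidableEq n] [Field K] : Matrix n n K :=
  (2 / (Fintype.card n : K)) • vecMulVec 1 1 - 1

/-- The evolution operator of the M-type Grover walk in Fourier space: `z` plays the role of the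
phase `ζ_N ^ k`. -/
def fourierGrover (m : ℕ) (z : K) : Matrix (Fin (2 * m + 1)) (Fin (2 * m + 1)) K :=
  diagonal (fun i : Fin (2 * m + 1) ↦ z ^ ((m : ℤ) - (i : ℕ))) * groverCoin (Fin (2 * m + 1)) K

lemma coinM_eq_groverCoin (m : ℕ) : coinM m = groverCoin (Fin (2 * m + 1)) ℂ := by
  have hL : 2 * (m : ℂ) + 1 ≠ 0 := by exact_mod_cast (2 * m).succ_ne_zero
  ext i j
  obtain rfl | hij := eq_or_ne i j
  · simp only [coinM, groverCoin, if_true, Fintype.card_fin, Matrix.sub_apply, Matrix.smul_apply,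
      vecMulVec_apply, Pi.one_apply, smul_eq_mul, one_apply_eq]
    push_cast
    field_simp
    ring
  · simp [coinM, groverCoin, hij]

lemma fMk_eq_charpoly_fourierGrover (m N : ℕ) (k : ℤ) :
    fMk m N k = (fourierGrover m (zetaN N ^ k)).charpoly := by
  simp only [fMk, ZmatPow, fourierGrover, coinM_eq_groverCoin, _root_.zpow_mul']

theorem coeff_charpoly_fourierGrover {m : ℕ} (hL : 2 * (m : K) + 1 ≠ 0) (hz : z ≠ 0) (r : ℕ) :
    (fourierGrover m z).charpoly.coeff r =
      -((2 * m + 1 - 2 * r) / (2 * m + 1)) *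
        ∑ t ∈ (Icc (-(m : ℤ)) m).powersetCard r, z ^ ∑ x ∈ t, x := by
  have hprod : ∏ i : Fin (2 * m + 1), (X + C (z ^ ((m : ℤ) - (i : ℕ)))) =
      ∏ j ∈ Icc (-(m : ℤ)) m, (X + C (z ^ (-j))) := by
    simp only [← prod_fin_eq_prod_Icc, neg_sub]
  rw [fourierGrover, groverCoin, coeff_charpoly_diagonal_mul_smul_sub_one, hprod,
    coeff_prod_X_add_C_zpow_neg hz, Fintype.card_fin]
  push_cast
  field_simp
  ring

lemma coeff_charpoly_fourierGrover_eq_sum_subsetSumCount {m r : ℕ} {b : ℤ}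
    (hL : 2 * (m : K) + 1 ≠ 0) (hz : z ≠ 0) (hb : 2 * b = r * (2 * m + 1 - r)) :
    (fourierGrover m z).charpoly.coeff r =
      -((2 * m + 1 - 2 * r) / (2 * m + 1)) *
        ∑ j ∈ Icc (-b) b, (subsetSumCount (Icc (-(m : ℤ)) m) r j : K) * z ^ j := by
  rw [coeff_charpoly_fourierGrover hL hz, sum_powersetCard_comp_sum (z ^ ·)]
  intro t ht
  obtain ⟨hsub, rfl⟩ := mem_powersetCard.mp ht
  have hbound := two_mul_abs_sum_le hsub
  exact mem_Icc.mpr (abs_le.mp (by linarith))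

theorem stmt9_general (m : ℕ) :
    ∃ a b : ℤ → ℤ, ∀ (K : Type*) [Field K], 2 * (m : K) + 1 ≠ 0 → ∀ z : K, z ≠ 0 →
      (fourierGrover m z).charpoly.Monic ∧
      (fourierGrover m z).charpoly.natDegree = 2 * m + 1 ∧
      (fourierGrover m z).charpoly.coeff 0 = -1 ∧
      (fourierGrover m z).charpoly.coeff 1 =
        -((2 * (m : K) - 1) / (2 * (m : K) + 1)) * ∑ j ∈ Icc (-(m : ℤ)) (m : ℤ), z ^ j ∧
      (fourierGrover m z).charpoly.coeff 2 =
        -((2 * (m : K) - 3) / (2 * (m : K) + 1)) *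
          ∑ j ∈ Icc (-(2 * (m : ℤ) - 1)) (2 * (m : ℤ) - 1), (a j : K) * z ^ j ∧
      (fourierGrover m z).charpoly.coeff 3 =
        -((2 * (m : K) - 5) / (2 * (m : K) + 1)) *
          ∑ j ∈ Icc (-(3 * (m : ℤ) - 3)) (3 * (m : ℤ) - 3), (b j : K) * z ^ j := by
  refine ⟨fun j ↦ subsetSumCount (Icc (-(m : ℤ)) m) 2 j,
    fun j ↦ subsetSumCount (Icc (-(m : ℤ)) m) 3 j,
    fun K _ hL z hz ↦ ⟨charpoly_monic _, by simp, ?_, ?_, ?_, ?_⟩⟩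
  · simp [coeff_charpoly_fourierGrover hL hz, hL]
  · rw [coeff_charpoly_fourierGrover hL hz, powersetCard_one, sum_map]
    simp only [Function.Embedding.coeFn_mk, sum_singleton]
    congr 1
    push_cast
    ring
  · rw [coeff_charpoly_fourierGrover_eq_sum_subsetSumCount (b := 2 * m - 1) hL hz
      (by push_cast; ring)]
    simp only [Int.cast_natCast]
    congr 1
    push_cast
    ring
  · rw [coeff_charpoly_fourierGrover_eq_sum_subsetSumCount (b := 3 * m - 3) hL hz
      (by push_cast; ring)]
    simp only [Int.cast_natCast]
    congr 1
    push_cast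
    ring

end GroverCoin

/-- For odd `L = 2m+1 ≥ 3`, every `f^{M,L}_{N,k}` is monic of degree `L` with
constant coefficient `−1` and coefficient of `x` equal to
`−((2m−1)/L)·Σ_{j=−m}^{m} ζ_N^{jk}`; moreover there are integers `a_j` (`|j| ≤ 2m−1`)
and `b_j` (`|j| ≤ 3m−3`) depending only on `L` such that the coefficients of `x²` and `x³`
are `−((2m−3)/L)·Σ a_j ζ_N^{jk}` and `−((2m−5)/L)·Σ b_j ζ_N^{jk}` respectively. -/
theorem stmt9 (m : ℕ) (hm : 1 ≤ m) :
    ∃ a b : ℤ → ℤ, ∀ N : ℕ, 2 ≤ N → ∀ k : ℤ,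
      (fMk m N k).Monic ∧ (fMk m N k).natDegree = 2*m+1 ∧
      (fMk m N k).coeff 0 = -1 ∧
      (fMk m N k).coeff 1 =
        -((2*(m:ℂ)-1)/(2*(m:ℂ)+1)) * ∑ j ∈ Finset.Icc (-(m:ℤ)) (m:ℤ), zetaN N ^ (j*k) ∧
      (fMk m N k).coeff 2 =
        -((2*(m:ℂ)-3)/(2*(m:ℂ)+1)) *
          ∑ j ∈ Finset.Icc (-(2*(m:ℤ)-1)) (2*(m:ℤ)-1), (a j : ℂ) * zetaN N ^ (j*k) ∧
      (fMk m N k).coeff 3 =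
        -((2*(m:ℂ)-5)/(2*(m:ℂ)+1)) *
          ∑ j ∈ Finset.Icc (-(3*(m:ℤ)-3)) (3*(m:ℤ)-3), (b j : ℂ) * zetaN N ^ (j*k) := by
  obtain ⟨a, b, h⟩ := stmt9_general m
  refine ⟨a, b, fun N _ k ↦ ?_⟩
  simpa only [fMk_eq_charpoly_fourierGrover, _root_.zpow_mul'] using
    h ℂ (by exact_mod_cast (2 * m).succ_ne_zero) (zetaN N ^ k)
      (zpow_ne_zero k (Complex.exp_ne_zero _))
end
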